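/- Let {𝖾_n}_{n≥0} be an orthonormal basis of H and φ_n = n^{-β}𝖾_n + n^{-α}𝖾_0 (n ≥ 1) with β > 0 and α > 1/2 (and α - β ≤ 1/2). Then for any sequence f_m ∈ D(S̄) with ⟨S̄f_m, f_m⟩ → 0 and f_m → g in H, one has g = 0; hence {φ_n} is a generalized Riesz system. -/

import Mathlib

open scoped ComplexInnerProductSpace
open Filter Topology

noncomputable section

variable {H : Type*} [NormedAddCommGroup H] [InnerProductSpace ℂ H] [CompleteSpace H]

/-- `A` is a positive operator. -/
def LinearPMap.IsPositive (A : H →ₗ.[ℂ] H) : Prop :=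
  ∀ f : A.domain, (f : H) ≠ 0 → 0 < (⟪A f, (f : H)⟫).re

/-- `{e_n}` is an orthonormal basis of `H`. -/
def IsONB (e : ℕ → H) : Prop :=
  Orthonormal ℂ e ∧ Dense ((Submodule.span ℂ (Set.range e) : Submodule ℂ H) : Set H)

/-- `{φ_n}` is a generalized Riesz system: `φ_n = e^{Q/2} e_n` for a self-adjoint operator `Q`
and an orthonormal basis `{e_n}` with `e_n ∈ D(e^{Q/2}) ∩ D(e^{-Q/2})`.  Here `E = e^{Q/2}` and
`F = e^{-Q/2}` are encoded as a pair of mutually inverse positive self-adjoint operators. -/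
def IsGRS (φ : ℕ → H) : Prop :=
  ∃ (E F : H →ₗ.[ℂ] H) (e : ℕ → H),
    IsSelfAdjoint E ∧ IsSelfAdjoint F ∧ E.IsPositive ∧ F.IsPositive ∧
    (∀ x : E.domain, ∃ h : E x ∈ F.domain, F ⟨E x, h⟩ = (x : H)) ∧
    (∀ y : F.domain, ∃ h : F y ∈ E.domain, E ⟨F y, h⟩ = (y : H)) ∧
    IsONB e ∧
    ∀ n, ∃ (h1 : e n ∈ E.domain) (_ : e n ∈ F.domain), φ n = E ⟨e n, h1⟩

/-!
The sequence `φ` is a Bessel sequence, so its analysis operator `A x = (⟪φ n, x⟫)ₙ` is a bounded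
map into `ℓ²` with `A† δₙ = φ n`, and `A ψₙ = δₙ` for the biorthogonal sequence `ψₙ = n ^ β 𝖾ₙ`.
Hence `A† A (S f) = f` on the span of `φ`, and on the domain of the closure by continuity, so that
`⟪S f, f⟫ = ‖A (S f)‖²` controls `f = A† (A (S f))`.

The condition `α - β ≤ 1 / 2` makes `φ` total, that is, `A` injective, and biorthogonality makes the
range of `A` dense. The polar decomposition `A = U P` therefore has a unitary factor, `bₙ = U⁻¹ δₙ`
is an orthonormal basis, and `P ψₙ = bₙ`, `P bₙ = φ n`.
-/

section UnboundedOperators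

open LinearPMap

variable {𝕜 E F : Type*} [RCLike 𝕜] [NormedAddCommGroup E] [InnerProductSpace 𝕜 E]

theorem dense_iff_orthogonal_eq_bot [CompleteSpace E] {K : Submodule 𝕜 E} :
    Dense (K : Set E) ↔ Kᗮ = ⊥ := by
  rw [Submodule.dense_iff_topologicalClosure_eq_top, Submodule.topologicalClosure_eq_top_iff]

theorem adjoint_map_prodComm [NormedAddCommGroup F] [InnerProductSpace 𝕜 F]
    (g : Submodule 𝕜 (E × F)) :
    (g.map (LinearEquiv.prodComm 𝕜 E F : E × F →ₗ[𝕜] F × E)).adjoint =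
      g.adjoint.map (LinearEquiv.prodComm 𝕜 F E : F × E →ₗ[𝕜] E × F) := by
  ext ⟨x, y⟩
  have hswap : (x, y) ∈ g.adjoint.map (LinearEquiv.prodComm 𝕜 F E : F × E →ₗ[𝕜] E × F) ↔
      (y, x) ∈ g.adjoint := by
    simp
  rw [hswap]
  simp only [Submodule.mem_adjoint_iff, Submodule.mem_map, Prod.exists, LinearEquiv.coe_coe,
    LinearEquiv.prodComm_apply, Prod.swap_prod_mk, Prod.mk.injEq]
  refine ⟨fun h a b hab ↦ ?_, ?_⟩
  · rw [← neg_sub, h b a ⟨a, b, hab, rfl, rfl⟩, neg_zero]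
  · rintro h _ _ ⟨a, b, hab, rfl, rfl⟩
    rw [← neg_sub, h a b hab, neg_zero]

variable [CompleteSpace E] {A : E →ₗ.[𝕜] E}

theorem denseRange_of_isSelfAdjoint (hA : IsSelfAdjoint A) (hker : LinearMap.ker A.toFun = ⊥) :
    DenseRange A := by
  change Dense (LinearMap.range A.toFun : Set E)
  rw [dense_iff_orthogonal_eq_bot, Submodule.eq_bot_iff]
  intro y hy
  have hgraph : (y, (0 : E)) ∈ A.graph := by
    rw [← isSelfAdjoint_def.1 hA, adjoint_graph_eq_graph_adjoint hA.dense_domain,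
      Submodule.mem_adjoint_iff]
    rintro a b hab
    obtain ⟨x, -, rfl⟩ := (mem_graph_iff A).1 hab
    simpa using hy (A x) ⟨x, rfl⟩
  obtain ⟨x, rfl, hx⟩ := (mem_graph_iff A).1 hgraph
  exact congrArg Subtype.val (LinearMap.ker_eq_bot'.1 hker x hx)

theorem isSelfAdjoint_inverse (hA : IsSelfAdjoint A) (hker : LinearMap.ker A.toFun = ⊥) :
    IsSelfAdjoint A.inverse := by
  have hdense : Dense (A.inverse.domain : Set E) := by
    rw [inverse_domain]
    exact denseRange_of_isSelfAdjoint hA hker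
  apply eq_of_eq_graph
  change A.inverse†.graph = _
  rw [adjoint_graph_eq_graph_adjoint hdense, inverse_graph hker, adjoint_map_prodComm,
    ← adjoint_graph_eq_graph_adjoint hA.dense_domain, isSelfAdjoint_def.1 hA]

end UnboundedOperators

section PositiveOperators

omit [CompleteSpace H] in
theorem ker_eq_bot_of_isPositive {A : H →ₗ.[ℂ] H} (hA : A.IsPositive) :
    LinearMap.ker A.toFun = ⊥ := by
  refine LinearMap.ker_eq_bot'.2 fun x hx ↦ ?_
  by_contra hne
  have hpos := hA x (by simpa using hne)
  rw [show A x = 0 from hx] at hpos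
  simp at hpos

omit [CompleteSpace H] in
theorem isPositive_inverse {A : H →ₗ.[ℂ] H} (hA : A.IsPositive) : A.inverse.IsPositive := by
  rintro ⟨y, hy⟩ hne
  have hker := ker_eq_bot_of_isPositive hA
  obtain ⟨x, rfl⟩ : ∃ x, A x = y := by rwa [LinearPMap.inverse_domain] at hy
  rw [LinearPMap.inverse_apply_eq hker (x := x) rfl, ← inner_conj_symm, Complex.conj_re]
  exact hA x fun hx ↦ hne (by simp [Subtype.ext (a2 := (0 : A.domain)) hx])

theorem isGRS_of_isPositive {A : H →ₗ.[ℂ] H} (hsa : IsSelfAdjoint A) (hpos : A.IsPositive)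
    {e : ℕ → H} (he : IsONB e) (hdom : ∀ n, e n ∈ A.domain)
    (hrange : ∀ n, e n ∈ Set.range A) : IsGRS fun n ↦ A ⟨e n, hdom n⟩ := by
  have hker := ker_eq_bot_of_isPositive hpos
  have hmem (y : H) : y ∈ A.inverse.domain ↔ y ∈ Set.range A := by
    rw [LinearPMap.inverse_domain]
    rfl
  refine ⟨A, A.inverse, e, hsa, isSelfAdjoint_inverse hsa hker, hpos, isPositive_inverse hpos,
    fun x ↦ ⟨(hmem _).2 ⟨x, rfl⟩, LinearPMap.inverse_apply_eq hker rfl⟩, ?_, he,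
    fun n ↦ ⟨hdom n, (hmem _).2 (hrange n), rfl⟩⟩
  rintro ⟨y, hy⟩
  obtain ⟨x, rfl⟩ := (hmem y).1 hy
  rw [LinearPMap.inverse_apply_eq hker (x := x) rfl]
  exact ⟨x.2, rfl⟩

theorem re_inner_map_self_pos {P : H →L[ℂ] H} (hP : 0 ≤ P) (hinj : Function.Injective P)
    {x : H} (hx : x ≠ 0) : 0 < (⟪P x, x⟫).re := by
  set R := CFC.sqrt P
  have hRR (y : H) : R (R y) = P y := congr($(CFC.sqrt_mul_sqrt_self P hP) y)
  have hR : R.IsPositive := R.nonneg_iff_isPositive.1 (CFC.sqrt_nonneg P)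
  have hRx : R x ≠ 0 := fun h ↦ hx (hinj (by rw [← hRR, h, map_zero, map_zero]))
  rw [← hRR, hR.inner_left_eq_inner_right]
  exact re_inner_self_pos (𝕜 := ℂ).2 hRx

theorem isGRS_of_nonneg {P : H →L[ℂ] H} (hP : 0 ≤ P) (hinj : Function.Injective P)
    {e : ℕ → H} (he : IsONB e) (hrange : ∀ n, e n ∈ Set.range P) : IsGRS fun n ↦ P (e n) := by
  have hsa : IsSelfAdjoint (P.toPMap ⊤) := by
    rw [LinearPMap.isSelfAdjoint_def, P.toPMap_adjoint_eq_adjoint_toPMap_of_dense (by simp),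
      hP.isSelfAdjoint.adjoint_eq]
  refine isGRS_of_isPositive hsa (fun x hx ↦ re_inner_map_self_pos hP hinj hx) he
    (fun _ ↦ trivial) fun n ↦ ?_
  obtain ⟨x, hx⟩ := hrange n
  exact ⟨⟨x, trivial⟩, hx⟩

theorem exists_polar_decomposition {K : Type*} [NormedAddCommGroup K] [InnerProductSpace ℂ K]
    [CompleteSpace K] {A : H →L[ℂ] K} (hinj : Function.Injective A) (hdense : DenseRange A) :
    ∃ (P : H →L[ℂ] H) (U : H ≃ₗᵢ[ℂ] K), 0 ≤ P ∧ ∀ x, U (P x) = A x := by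
  have hAA : 0 ≤ A.adjoint ∘L A :=
    (ContinuousLinearMap.nonneg_iff_isPositive _).2 A.isPositive_adjoint_comp_self
  set P := CFC.sqrt (A.adjoint ∘L A)
  have hP0 : 0 ≤ P := CFC.sqrt_nonneg _
  have hP : P.IsPositive := P.nonneg_iff_isPositive.1 hP0
  have hPP (x : H) : P (P x) = A.adjoint (A x) := congr($(CFC.sqrt_mul_sqrt_self _ hAA) x)
  have hnorm (x : H) : ‖A x‖ = ‖P x‖ := by
    rw [@norm_eq_sqrt_re_inner ℂ, @norm_eq_sqrt_re_inner ℂ, hP.inner_left_eq_inner_right, hPP,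
      A.adjoint_inner_right]
  have hPinj : Function.Injective P := (injective_iff_map_eq_zero P).2 fun x hx ↦
    (injective_iff_map_eq_zero A).1 hinj x (by rw [← norm_eq_zero, hnorm, hx, norm_zero])
  have hPdense : DenseRange P := by
    change Dense (P.range : Set H)
    rw [dense_iff_orthogonal_eq_bot, P.orthogonal_range, hP.isSelfAdjoint.adjoint_eq]
    exact LinearMap.ker_eq_bot.2 hPinj
  exact ⟨P,
    (LinearEquiv.refl ℂ H).extendOfIsometry P.toLinearMap A.toLinearMap hPdense hdense hnorm, hP0,
    LinearEquiv.extendOfIsometry_eq _ _ _ hPdense hdense hnorm⟩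

end PositiveOperators

section BesselSequences

open scoped lp

variable {𝕜 E ι : Type*} [RCLike 𝕜] [NormedAddCommGroup E] [InnerProductSpace 𝕜 E]

theorem mem_orthogonal_span_iff {s : Set E} {y : E} :
    y ∈ (Submodule.span 𝕜 s)ᗮ ↔ ∀ x ∈ s, inner 𝕜 x y = 0 := by
  rw [← Submodule.span_singleton_le_iff_mem, ← Submodule.isOrtho_iff_le, Submodule.isOrtho_comm,
    Submodule.isOrtho_span]
  simp only [Set.mem_singleton_iff, forall_eq]

variable (𝕜) in
/-- Bessel sequences. Square summability of the coefficients is only asked pointwise; on a Hilbert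
space the usual bound `∑ |⟪φ i, x⟫|² ≤ C ‖x‖²` follows by the closed graph theorem. -/
def IsBessel (φ : ι → E) : Prop :=
  ∀ x, Memℓp (fun i ↦ inner 𝕜 (φ i) x) 2

variable (𝕜) in
/-- Biorthogonality of two sequences: `⟪φ i, ψ j⟫ = δ i j`. -/
def IsBiorthogonal (φ ψ : ι → E) : Prop :=
  (∀ i, inner 𝕜 (φ i) (ψ i) = 1) ∧ Pairwise fun i j ↦ inner 𝕜 (φ i) (ψ j) = 0

theorem isBessel_smul_const {c : ι → 𝕜} (hc : Memℓp c 2) (v : E) :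
    IsBessel 𝕜 fun i ↦ c i • v := fun x ↦ by
  refine (hc.norm.const_mul ‖inner 𝕜 v x‖).mono fun i ↦ ?_
  rw [inner_smul_left, norm_mul, RCLike.norm_conj, mul_comm]

theorem isBessel_of_orthonormal {e : ι → E} (he : Orthonormal 𝕜 e) : IsBessel 𝕜 e :=
  fun x ↦ memℓp_gen (by simpa using he.inner_products_summable x)

namespace IsBessel

variable {φ φ' ψ : ι → E}

theorem add (hφ : IsBessel 𝕜 φ) (hφ' : IsBessel 𝕜 φ') : IsBessel 𝕜 (φ + φ') := fun x ↦ by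
  convert (hφ x).add (hφ' x) using 1
  ext i
  exact inner_add_left _ _ _

theorem smul_of_norm_le (hφ : IsBessel 𝕜 φ) {a : ι → 𝕜} {C : ℝ} (ha : ∀ i, ‖a i‖ ≤ C) :
    IsBessel 𝕜 (a • φ) := fun x ↦ by
  refine ((hφ x).norm.const_mul C).mono fun i ↦ ?_
  rw [Pi.smul_apply', inner_smul_left, norm_mul, RCLike.norm_conj]
  exact mul_le_mul_of_nonneg_right (ha i) (norm_nonneg _)

/-- The coefficient map `x ↦ (⟪φ i, x⟫)ᵢ` of a Bessel sequence, before continuity is known. -/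
def coeff (hφ : IsBessel 𝕜 φ) : E →ₗ[𝕜] ℓ²(ι, 𝕜) where
  toFun x := ⟨fun i ↦ inner 𝕜 (φ i) x, hφ x⟩
  map_add' x y := by ext i; exact inner_add_right _ _ _
  map_smul' c x := by ext i; exact inner_smul_right _ _ _

variable [CompleteSpace E]

/-- The analysis operator `x ↦ (⟪φ i, x⟫)ᵢ` of a Bessel sequence. -/
def analysis (hφ : IsBessel 𝕜 φ) : E →L[𝕜] ℓ²(ι, 𝕜) :=
  ContinuousLinearMap.ofSeqClosedGraph (g := hφ.coeff) fun u x y hu hy ↦ by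
    ext i
    have hcoord : Tendsto (fun n ↦ inner 𝕜 (φ i) (u n)) atTop (𝓝 (y i)) :=
      ((lp.evalCLM 𝕜 (fun _ : ι ↦ 𝕜) 2 i).continuous.tendsto y).comp hy
    exact tendsto_nhds_unique hcoord (tendsto_const_nhds.inner hu)

theorem analysis_apply (hφ : IsBessel 𝕜 φ) (x : E) (i : ι) : hφ.analysis x i = inner 𝕜 (φ i) x :=
  rfl

theorem adjoint_analysis_single [DecidableEq ι] (hφ : IsBessel 𝕜 φ) (i : ι) :
    hφ.analysis.adjoint (lp.single 2 i 1) = φ i := by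
  refine ext_inner_right 𝕜 fun x ↦ ?_
  rw [ContinuousLinearMap.adjoint_inner_left, lp.inner_single_left, hφ.analysis_apply]
  simp

theorem analysis_of_isBiorthogonal [DecidableEq ι] (hφ : IsBessel 𝕜 φ)
    (hφψ : IsBiorthogonal 𝕜 φ ψ) (i : ι) : hφ.analysis (ψ i) = lp.single 2 i 1 := by
  ext j
  rw [hφ.analysis_apply]
  rcases eq_or_ne j i with rfl | hij
  · rw [hφψ.1, lp.single_apply_self]
  · rw [hφψ.2 hij, lp.single_apply_ne _ _ _ hij]

theorem analysis_injective (hφ : IsBessel 𝕜 φ)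
    (htotal : (Submodule.span 𝕜 (Set.range φ))ᗮ = ⊥) : Function.Injective hφ.analysis := by
  refine (injective_iff_map_eq_zero _).2 fun x hx ↦ ?_
  rw [← Submodule.mem_bot 𝕜, ← htotal, mem_orthogonal_span_iff]
  rintro _ ⟨i, rfl⟩
  rw [← hφ.analysis_apply, hx]
  rfl

theorem denseRange_analysis (hφ : IsBessel 𝕜 φ) (hφψ : IsBiorthogonal 𝕜 φ ψ) :
    DenseRange hφ.analysis := by
  classical
  change Dense (hφ.analysis.range : Set ℓ²(ι, 𝕜))
  rw [dense_iff_orthogonal_eq_bot, Submodule.eq_bot_iff]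
  intro y hy
  ext i
  have := hy _ ⟨ψ i, hφ.analysis_of_isBiorthogonal hφψ i⟩
  simpa [lp.inner_single_left] using this

end IsBessel

end BesselSequences

omit [CompleteSpace H] in
theorem isONB_hilbertBasis (b : HilbertBasis ℕ ℂ H) : IsONB b :=
  ⟨b.orthonormal, Submodule.dense_iff_topologicalClosure_eq_top.2 b.dense_span⟩

theorem IsBessel.isGRS {φ ψ : ℕ → H} (hφ : IsBessel ℂ φ) (hφψ : IsBiorthogonal ℂ φ ψ)
    (htotal : (Submodule.span ℂ (Set.range φ))ᗮ = ⊥) : IsGRS φ := by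
  obtain ⟨P, U, hP, hUP⟩ :=
    exists_polar_decomposition (hφ.analysis_injective htotal) (hφ.denseRange_analysis hφψ)
  have hPinj : Function.Injective P := fun x y h ↦
    hφ.analysis_injective htotal (by rw [← hUP, h, hUP])
  have hPpos : P.IsPositive := P.nonneg_iff_isPositive.1 hP
  set e := HilbertBasis.ofRepr U
  have hPψ (n : ℕ) : P (ψ n) = e n := by
    rw [← e.repr_symm_single n, ← hφ.analysis_of_isBiorthogonal hφψ, ← hUP]
    exact (U.symm_apply_apply _).symm
  have hPe (n : ℕ) : P (e n) = φ n := by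
    refine ext_inner_right ℂ fun x ↦ ?_
    rw [hPpos.inner_left_eq_inner_right, ← e.repr_apply_apply]
    exact (congr($(hUP x) n)).trans (hφ.analysis_apply x n)
  simpa only [hPe] using isGRS_of_nonneg hP hPinj (isONB_hilbertBasis e) fun n ↦ ⟨ψ n, hPψ n⟩

section PositivelyClosable

theorem map_apply_eq_of_domain_le_span {R M N : Type*} [Ring R] [AddCommGroup M] [Module R M]
    [AddCommGroup N] [Module R N] {S : M →ₗ.[R] N} {B : N →ₗ[R] M} {s : Set M}
    (hs : S.domain ≤ Submodule.span R s) (h : ∀ x ∈ s, ∃ hx : x ∈ S.domain, B (S ⟨x, hx⟩) = x)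
    (x : S.domain) : B (S x) = x := by
  have hspan : Submodule.span R s ≤
      (LinearMap.eqLocus (B ∘ₗ S.toFun) S.domain.subtype).map S.domain.subtype := by
    refine Submodule.span_le.2 fun y hy ↦ ?_
    obtain ⟨hdom, hBS⟩ := h y hy
    exact ⟨⟨y, hdom⟩, hBS, rfl⟩
  obtain ⟨y, hy, hyx⟩ := hspan (hs x.2)
  obtain rfl : y = x := Subtype.ext hyx
  exact hy

theorem map_closure_apply_eq {R M N : Type*} [CommRing R] [TopologicalSpace R]
    [AddCommGroup M] [Module R M] [TopologicalSpace M] [ContinuousAdd M] [ContinuousSMul R M]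
    [AddCommGroup N] [Module R N] [TopologicalSpace N] [ContinuousAdd N] [ContinuousSMul R N]
    [T2Space M] {S : M →ₗ.[R] N} (hS : S.IsClosable) {B : N →L[R] M}
    (h : ∀ x : S.domain, B (S x) = x) (x : S.closure.domain) : B (S.closure x) = x := by
  have hclosed : IsClosed {p : M × N | B p.2 = p.1} :=
    isClosed_eq (B.continuous.comp continuous_snd) continuous_fst
  have hgraph : (S.graph : Set (M × N)) ⊆ {p | B p.2 = p.1} := by
    rintro ⟨_, _⟩ hp
    obtain ⟨y, rfl, rfl⟩ := (LinearPMap.mem_graph_iff S).1 hp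
    exact h y
  have hx := S.closure.mem_graph x
  rw [← hS.graph_closure_eq_closure_graph] at hx
  exact closure_minimal hgraph hclosed hx

variable {𝕜 E F : Type*} [RCLike 𝕜] [NormedAddCommGroup E] [InnerProductSpace 𝕜 E]

/-- An operator `S` is positively closable if its quadratic form `f ↦ ⟪S f, f⟫` can only tend to
`0` along a convergent sequence whose limit is `0`. -/
def IsPositivelyClosable (S : E →ₗ.[𝕜] E) : Prop :=
  ∀ (f : ℕ → S.domain) (g : E),
    Tendsto (fun m ↦ RCLike.re (inner 𝕜 (S (f m)) (f m : E))) atTop (𝓝 0) →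
    Tendsto (fun m ↦ (f m : E)) atTop (𝓝 g) → g = 0

variable [CompleteSpace E]

-- The form is `⟪S f, f⟫ = ‖A (S f)‖²`, while `f = A† (A (S f))` depends continuously on `A (S f)`.
theorem isPositivelyClosable_of_adjoint_comp [NormedAddCommGroup F] [InnerProductSpace 𝕜 F]
    [CompleteSpace F] {A : E →L[𝕜] F} {S : E →ₗ.[𝕜] E}
    (h : ∀ x : S.domain, A.adjoint (A (S x)) = x) : IsPositivelyClosable S := by
  intro f g hform hg
  have hnorm (x : S.domain) : ‖A (S x)‖ = √(RCLike.re (inner 𝕜 (S x) (x : E))) := by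
    rw [norm_eq_sqrt_re_inner (𝕜 := 𝕜), ← A.adjoint_inner_right, h]
  have hAS : Tendsto (fun m ↦ A (S (f m))) atTop (𝓝 0) := by
    rw [tendsto_zero_iff_norm_tendsto_zero]
    simpa only [hnorm, Real.sqrt_zero] using hform.sqrt
  have hzero := (A.adjoint.continuous.tendsto 0).comp hAS
  simp only [Function.comp_def, h, map_zero] at hzero
  exact tendsto_nhds_unique hg hzero

theorem IsBessel.isPositivelyClosable_closure {ι : Type*} {φ ψ : ι → E} (hφ : IsBessel 𝕜 φ)
    (hφψ : IsBiorthogonal 𝕜 φ ψ) {S : E →ₗ.[𝕜] E} (hS : S.IsClosable)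
    (hdom : S.domain ≤ Submodule.span 𝕜 (Set.range φ))
    (hSφ : ∀ i, ∃ h : φ i ∈ S.domain, S ⟨φ i, h⟩ = ψ i) : IsPositivelyClosable S.closure := by
  classical
  refine isPositivelyClosable_of_adjoint_comp (A := hφ.analysis)
    (map_closure_apply_eq (B := hφ.analysis.adjoint ∘L hφ.analysis) hS
      (map_apply_eq_of_domain_le_span
        (B := (hφ.analysis.adjoint ∘L hφ.analysis).toLinearMap) hdom ?_))
  rintro _ ⟨i, rfl⟩
  obtain ⟨h, hi⟩ := hSφ i
  refine ⟨h, ?_⟩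
  simp only [hi, ContinuousLinearMap.coe_coe, ContinuousLinearMap.comp_apply,
    hφ.analysis_of_isBiorthogonal hφψ, hφ.adjoint_analysis_single]

end PositivelyClosable

section RankOnePerturbation

open scoped ComplexConjugate

variable {𝕜 E ι : Type*} [RCLike 𝕜] [NormedAddCommGroup E] [InnerProductSpace 𝕜 E]
  {e : ι → E} {v : E} {a c d : ι → 𝕜}

theorem isBessel_smul_add_smul_const (he : Orthonormal 𝕜 e) {C : ℝ} (ha : ∀ i, ‖a i‖ ≤ C)
    (hc : Memℓp c 2) : IsBessel 𝕜 fun i ↦ a i • e i + c i • v :=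
  ((isBessel_of_orthonormal he).smul_of_norm_le ha).add (isBessel_smul_const hc v)

theorem isBiorthogonal_smul_add_smul_const (he : Orthonormal 𝕜 e) (hv : ∀ i, inner 𝕜 v (e i) = 0)
    (had : ∀ i, conj (a i) * d i = 1) :
    IsBiorthogonal 𝕜 (fun i ↦ a i • e i + c i • v) (fun i ↦ d i • e i) := by
  have hinner (i j : ι) : inner 𝕜 (a i • e i + c i • v) (d j • e j) =
      conj (a i) * d j * inner 𝕜 (e i) (e j) := by
    rw [inner_add_left, inner_smul_left, inner_smul_left, inner_smul_right, inner_smul_right, hv]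
    ring
  refine ⟨fun i ↦ ?_, fun i j hij ↦ ?_⟩
  · rw [hinner, had, inner_self_eq_norm_sq_to_K, he.1]
    simp
  · exact (hinner i j).trans (by rw [he.2 hij, mul_zero])

-- A vector `y` orthogonal to the sequence has `|⟪e i, y⟫| = |c i / a i| |⟪v, y⟫|`, so Bessel's
-- inequality for `e` forces `⟪v, y⟫ = 0`.
theorem orthogonal_span_smul_add_smul_const_eq_bot (he : Orthonormal 𝕜 e)
    (htotal : (Submodule.span 𝕜 (insert v (Set.range e)))ᗮ = ⊥) (ha : ∀ i, a i ≠ 0)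
    (hca : ¬ Memℓp (fun i ↦ c i / a i) 2) :
    (Submodule.span 𝕜 (Set.range fun i ↦ a i • e i + c i • v))ᗮ = ⊥ := by
  refine (Submodule.eq_bot_iff _).2 fun y hy ↦ ?_
  rw [mem_orthogonal_span_iff, Set.forall_mem_range] at hy
  have hcoeff (i : ι) : inner 𝕜 (e i) y = -(conj (c i / a i) * inner 𝕜 v y) := by
    have hi := hy i
    rw [inner_add_left, inner_smul_left, inner_smul_left] at hi
    have : conj (a i) ≠ 0 := (map_ne_zero _).2 (ha i)
    rw [map_div₀]
    field_simp
    linear_combination hi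
  have hv : inner 𝕜 v y = 0 := by
    by_contra hne
    refine hca (((isBessel_of_orthonormal he y).norm.const_mul ‖inner 𝕜 v y‖⁻¹).mono fun i ↦ ?_)
    rw [hcoeff, norm_neg, norm_mul, RCLike.norm_conj, mul_comm, mul_assoc,
      mul_inv_cancel₀ (norm_ne_zero_iff.2 hne), mul_one]
  rw [← Submodule.mem_bot 𝕜, ← htotal, mem_orthogonal_span_iff, Set.forall_mem_insert,
    Set.forall_mem_range]
  exact ⟨hv, fun i ↦ by rw [hcoeff, hv, mul_zero, neg_zero]⟩

end RankOnePerturbation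

section PowerWeights

/-- The weights `n ^ s`, `n ≥ 1`, indexed from `0`. -/
def powWeight (s : ℝ) (n : ℕ) : ℂ :=
  (((n + 1 : ℕ) : ℝ) ^ s : ℝ)

theorem norm_powWeight (s : ℝ) (n : ℕ) : ‖powWeight s n‖ = ((n + 1 : ℕ) : ℝ) ^ s := by
  rw [powWeight, Complex.norm_real, Real.norm_of_nonneg (by positivity)]

theorem norm_powWeight_le_one {s : ℝ} (hs : s ≤ 0) (n : ℕ) : ‖powWeight s n‖ ≤ 1 := by
  rw [norm_powWeight]
  exact Real.rpow_le_one_of_one_le_of_nonpos (by simp) hs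

theorem powWeight_ne_zero (s : ℝ) (n : ℕ) : powWeight s n ≠ 0 :=
  Complex.ofReal_ne_zero.2 (Real.rpow_pos_of_pos (by positivity) s).ne'

theorem powWeight_div_powWeight (s t : ℝ) (n : ℕ) :
    powWeight s n / powWeight t n = powWeight (s - t) n := by
  rw [powWeight, powWeight, powWeight, ← Complex.ofReal_div, Real.rpow_sub (by positivity)]

theorem conj_powWeight_neg_mul_powWeight (s : ℝ) (n : ℕ) :
    starRingEnd ℂ (powWeight (-s) n) * powWeight s n = 1 := by
  rw [powWeight, powWeight, Complex.conj_ofReal, ← Complex.ofReal_mul,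
    ← Real.rpow_add (by positivity), neg_add_cancel, Real.rpow_zero, Complex.ofReal_one]

theorem memℓp_powWeight_iff {p : ENNReal} (hp : 0 < p.toReal) (s : ℝ) :
    Memℓp (powWeight s) p ↔ s * p.toReal < -1 := by
  rw [memℓp_gen_iff hp, ← Real.summable_nat_rpow,
    ← summable_nat_add_iff (f := fun n : ℕ ↦ (n : ℝ) ^ (s * p.toReal)) 1]
  refine summable_congr fun n ↦ ?_
  rw [norm_powWeight, ← Real.rpow_mul (by positivity)]

theorem memℓp_two_powWeight_iff (s : ℝ) : Memℓp (powWeight s) 2 ↔ s < -(1 / 2) := by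
  rw [memℓp_powWeight_iff (by simp), ENNReal.toReal_ofNat]
  constructor <;> intro h <;> linarith

end PowerWeights

theorem image_one_le_eq_range_succ {M : Type*} (f : ℕ → M) :
    f '' {n | 1 ≤ n} = Set.range fun n ↦ f (n + 1) := by
  rw [← Function.comp_def f (· + 1), Set.range_comp]
  exact congrArg (f '' ·) Nat.range_succ.symm

theorem IsONB.orthogonal_span_insert_range_succ_eq_bot {e : ℕ → H} (he : IsONB e) :
    (Submodule.span ℂ (insert (e 0) (Set.range fun n ↦ e (n + 1))))ᗮ = ⊥ := by
  have hrange : insert (e 0) (Set.range fun n ↦ e (n + 1)) = Set.range e := Nat.range_of_succ e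
  rw [hrange]
  exact dense_iff_orthogonal_eq_bot.1 he.2

/-- Let `φ_n = n^{-β} ee_n + n^{-α} ee_0` (`n ≥ 1`) with `β > 0`, `α > 1/2` and `α - β ≤ 1/2`,
and let `S` be the operator `Sφ_n = n^{β} ee_n` on `span{φ_n}` with closure `S̄`.  Then for any
sequence `f_m ∈ D(S̄)` with `⟨S̄f_m, f_m⟩ → 0` and `f_m → g` one has `g = 0`; hence `{φ_n}` is a
generalized Riesz system. -/
theorem positively_closable_and_GRS
    (ee : ℕ → H) (hee : IsONB ee) (α β : ℝ) (hβ : 0 < β) (hα : 1 / 2 < α) (hαβ : α - β ≤ 1 / 2)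
    (S : H →ₗ.[ℂ] H) (hclos : S.IsClosable)
    (hdom : S.domain = Submodule.span ℂ
      ((fun n : ℕ => ((((n : ℝ) ^ (-β) : ℝ)) : ℂ) • ee n
          + ((((n : ℝ) ^ (-α) : ℝ)) : ℂ) • ee 0) '' {n : ℕ | 1 ≤ n}))
    (hS : ∀ n : ℕ, 1 ≤ n → ∃ h : ((((n : ℝ) ^ (-β) : ℝ)) : ℂ) • ee n
          + ((((n : ℝ) ^ (-α) : ℝ)) : ℂ) • ee 0 ∈ S.domain,
        S ⟨_, h⟩ = ((((n : ℝ) ^ β : ℝ)) : ℂ) • ee n) :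
    (∀ (f : ℕ → S.closure.domain) (g : H),
      Tendsto (fun m => (⟪S.closure (f m), ((f m) : H)⟫).re) atTop (𝓝 0) →
      Tendsto (fun m => ((f m) : H)) atTop (𝓝 g) → g = 0) ∧
    IsGRS (fun n : ℕ => ((((n + 1 : ℕ) : ℝ) ^ (-β) : ℝ) : ℂ) • ee (n + 1)
        + ((((n + 1 : ℕ) : ℝ) ^ (-α) : ℝ) : ℂ) • ee 0) := by
  have he : Orthonormal ℂ fun n ↦ ee (n + 1) := hee.1.comp _ (add_left_injective 1)
  let φ (n : ℕ) : H := powWeight (-β) n • ee (n + 1) + powWeight (-α) n • ee 0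
  have hbessel : IsBessel ℂ φ :=
    isBessel_smul_add_smul_const he (norm_powWeight_le_one (neg_nonpos.2 hβ.le))
      ((memℓp_two_powWeight_iff _).2 (neg_lt_neg hα))
  have hbi : IsBiorthogonal ℂ φ fun n ↦ powWeight β n • ee (n + 1) :=
    isBiorthogonal_smul_add_smul_const he (fun n ↦ hee.1.2 n.succ_ne_zero.symm)
      (conj_powWeight_neg_mul_powWeight β)
  have htotal : (Submodule.span ℂ (Set.range φ))ᗮ = ⊥ := by
    refine orthogonal_span_smul_add_smul_const_eq_bot he
      hee.orthogonal_span_insert_range_succ_eq_bot (powWeight_ne_zero (-β)) ?_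
    simp only [powWeight_div_powWeight]
    rw [memℓp_two_powWeight_iff]
    linarith
  rw [image_one_le_eq_range_succ] at hdom
  exact ⟨hbessel.isPositivelyClosable_closure hbi hclos hdom.le fun n ↦ hS (n + 1) n.succ_pos,
    hbessel.isGRS hbi htotal⟩
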